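/- Let φ : S¹ → ℝ be a C^∞ function whose critical points on the circle are exactly n nondegenerate local extremum points with pairwise distinct values, and define a marking ν of these nodes by: ν(p) = +1 if p is a local maximum of φ or the point where φ attains its absolute minimum, and ν(p) = −1 otherwise. Then γ((φ, ν)) = 0; that is, the ribbon (φ, ν) admits an extension with no critical points in the open unit disk. -/

import Mathlib

open scoped RealInnerProductSpace

noncomputable section

abbrev E2 : Type := EuclideanSpace ℝ (Fin 2)

/-- The point (cos t, sin t) on the unit circle in ℝ². -/
def sphPt (t : ℝ) : E2 := (EuclideanSpace.equiv (Fin 2) ℝ).symm ![Real.cos t, Real.sin t]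

/-- A ribbon with `n` nodes, encoded via the angle parametrization `g = φ ∘ (cos, sin)`
of a C^∞ function `φ : S¹ → ℝ` whose critical points on the circle are exactly the `n`
nondegenerate local extrema (nodes) at angles `θ 0 < θ 1 < ⋯ < θ (n-1)` in `[0, 2π)`,
with pairwise distinct critical values, together with a marking `ν` of the nodes by `±1`. -/
structure Ribbon (n : ℕ) : Type where
  g : ℝ → ℝ
  θ : Fin n → ℝ
  ν : Fin n → ℤ
  n_even : Even n
  n_pos : 0 < n
  smooth_g : ContDiff ℝ (⊤ : ℕ∞) g
  periodic_g : Function.Periodic g (2 * Real.pi)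
  theta_mem : ∀ i, θ i ∈ Set.Ico (0 : ℝ) (2 * Real.pi)
  theta_mono : StrictMono θ
  node_crit : ∀ i, deriv g (θ i) = 0
  node_nondeg : ∀ i, deriv (deriv g) (θ i) ≠ 0
  crit_only : ∀ t ∈ Set.Ico (0 : ℝ) (2 * Real.pi), deriv g t = 0 → ∃ i, t = θ i
  values_distinct : ∀ i j, g (θ i) = g (θ j) → i = j
  nu_sign : ∀ i, ν i = 1 ∨ ν i = -1

/-- The signature σ = s₊ − s₋ of a ribbon. -/
def Ribbon.sigma {n : ℕ} (a : Ribbon n) : ℤ := ∑ i, a.ν i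

/-- Critical points of `f` in the open unit disk. -/
def critPts (f : E2 → ℝ) : Set E2 :=
  {x | x ∈ Metric.ball (0 : E2) 1 ∧ fderiv ℝ f x = 0}

/-- `f : ℝ² → ℝ` is an extension of the ribbon `a`: it is C^∞, agrees with `φ` on the unit
circle, has nowhere-vanishing gradient on the circle, and at each node the radial derivative
`⟪∇f(p), p⟫` has sign `ν p` if `p` is a local maximum of `φ` (second derivative of `g`
negative there) and sign `−ν p` if `p` is a local minimum of `φ`. -/
def IsExtension {n : ℕ} (a : Ribbon n) (f : E2 → ℝ) : Prop :=
  ContDiff ℝ (⊤ : ℕ∞) f ∧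
  (∀ t : ℝ, f (sphPt t) = a.g t) ∧
  (∀ x ∈ Metric.sphere (0 : E2) 1, fderiv ℝ f x ≠ 0) ∧
  (∀ i : Fin n,
    (deriv (deriv a.g) (a.θ i) < 0 →
      0 < (a.ν i : ℝ) * ⟪gradient f (sphPt (a.θ i)), sphPt (a.θ i)⟫) ∧
    (0 < deriv (deriv a.g) (a.θ i) →
      (a.ν i : ℝ) * ⟪gradient f (sphPt (a.θ i)), sphPt (a.θ i)⟫ < 0))

/-- The ribbon invariant γ: the infimum, over all extensions `f` of `a`, of the number of
critical points of `f` in the open unit disk (a value in `ℕ∞`). -/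
def gammaR {n : ℕ} (a : Ribbon n) : ℕ∞ :=
  sInf {k : ℕ∞ | ∃ f : E2 → ℝ, IsExtension a f ∧ (critPts f).encard = k}

/-!
Let `p = sphPt α` be the point where `φ` attains its absolute minimum, and `g t = φ (sphPt t)`.
Since `g - g α` and `1 - cos (t - α)` vanish to second order exactly at `α`, one has `g t - g α =
(1 - cos (t - α)) ψ t` with `ψ` smooth, periodic and positive. On the circle `1 - cos (t - α)` is
the linear function `1 - ⟪p, w⟫`, which increases along every ray from `p` into the disk. If `ψ`
is extended to the disk by its value `P` on each such ray, then `(1 - ⟪p, w⟫) P w` increases along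
these rays as well, but `P` is singular at `p`. Near `p` one therefore blends `P` with a smooth
extension `E` of `ψ`, by a cutoff `χ` for which `‖w - p‖ χ` is small: the blending then
contributes only a small term to the derivative along the rays, which stays positive. The result
has no critical points. At a node `w ≠ p` the vector `w - p` is a positive multiple of `w` plus a
tangent vector, so the radial derivative is positive there, while it is negative at `p`.
-/

open scoped ContDiff Nat Real Topology

section Calculus

variable {E : Type*} [NormedAddCommGroup E] [NormedSpace ℝ E]

theorem hasDerivAt_intervalIntegral_of_contDiff {F : ℝ × ℝ → E} (hF : ContDiff ℝ 1 F)
    (a b x : ℝ) :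
    HasDerivAt (fun y => ∫ t in a..b, F (y, t)) (∫ t in a..b, fderiv ℝ F (x, t) (1, 0)) x := by
  have hF' : Continuous fun p : ℝ × ℝ => fderiv ℝ F p (1, 0) :=
    (hF.continuous_fderiv one_ne_zero).clm_apply continuous_const
  have hFc : Continuous F := hF.continuous
  obtain ⟨C, hC⟩ := ((isCompact_closedBall x 1).prod (isCompact_uIcc (a := a) (b := b)))
    |>.exists_bound_of_continuousOn hF'.continuousOn
  refine (intervalIntegral.hasDerivAt_integral_of_dominated_loc_of_deriv_le (bound := fun _ => C)
    (F := fun y t => F (y, t)) (F' := fun y t => fderiv ℝ F (y, t) (1, 0))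
    (Metric.closedBall_mem_nhds x one_pos) ?_ ?_ ?_ ?_ ?_ ?_).2
  · exact .of_forall fun y => (by fun_prop : Continuous fun t => F (y, t)).aestronglyMeasurable
  · exact (by fun_prop : Continuous fun t => F (x, t)).intervalIntegrable _ _
  · exact (hF'.comp (by fun_prop : Continuous fun t : ℝ => (x, t))).aestronglyMeasurable
  · exact .of_forall fun t ht y hy => hC (y, t) ⟨hy, Set.uIoc_subset_uIcc ht⟩
  · exact continuous_const.intervalIntegrable _ _
  · exact .of_forall fun t _ y _ =>
      ((hF.differentiable one_ne_zero) (y, t)).hasFDerivAt.comp_hasDerivAt y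
        ((hasDerivAt_id y).prodMk (hasDerivAt_const y t))

theorem contDiff_intervalIntegral_of_contDiff {F : ℝ × ℝ → E} (hF : ContDiff ℝ ∞ F) (a b : ℝ) :
    ContDiff ℝ ∞ fun x => ∫ t in a..b, F (x, t) := by
  refine contDiff_infty.2 fun n => ?_
  induction n generalizing F with
  | zero =>
    exact contDiff_zero.2 <| continuous_iff_continuousAt.2 fun x =>
      (hasDerivAt_intervalIntegral_of_contDiff (hF.of_le (by simp)) a b x).continuousAt
  | succ n ih =>
    have hderiv := hasDerivAt_intervalIntegral_of_contDiff (hF.of_le (by simp)) a b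
    rw [Nat.cast_succ, contDiff_succ_iff_deriv]
    refine ⟨fun x => (hderiv x).differentiableAt, by simp, ?_⟩
    rw [funext fun x => (hderiv x).deriv]
    exact ih ((hF.fderiv_right (by simp)).clm_apply contDiff_const)

theorem exists_contDiff_taylor_remainder [CompleteSpace E] {f : ℝ → E} (hf : ContDiff ℝ ∞ f)
    (x₀ : ℝ) (n : ℕ) :
    ∃ K : ℝ → E, ContDiff ℝ ∞ K ∧ K x₀ = ((n + 1)! : ℝ)⁻¹ • iteratedDeriv (n + 1) f x₀ ∧
      ∀ x, f x = ∑ k ∈ Finset.range (n + 1),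
        (k ! : ℝ)⁻¹ • (x - x₀) ^ k • iteratedDeriv k f x₀ + (x - x₀) ^ (n + 1) • K x := by
  have hderiv : ContDiff ℝ ∞ (iteratedDeriv (n + 1) f) := by
    rw [iteratedDeriv_eq_iterate]
    exact hf.iterate_deriv _
  refine ⟨fun x => (n ! : ℝ)⁻¹ •
    ∫ t in (0 : ℝ)..1, (1 - t) ^ n • iteratedDeriv (n + 1) f (x₀ + t * (x - x₀)), ?_, ?_, ?_⟩
  · refine .const_smul _ (contDiff_intervalIntegral_of_contDiff (F := fun p : ℝ × ℝ =>
      (1 - p.2) ^ n • iteratedDeriv (n + 1) f (x₀ + p.2 * (p.1 - x₀))) ?_ 0 1)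
    fun_prop
  · have hweight : ∫ t in (0 : ℝ)..1, (1 - t) ^ n = ((n : ℝ) + 1)⁻¹ := by
      rw [intervalIntegral.integral_comp_sub_left (fun t => t ^ n) 1]
      simp [integral_pow]
    simp only [sub_self, mul_zero, add_zero]
    rw [intervalIntegral.integral_smul_const, hweight, smul_smul, Nat.factorial_succ]
    push_cast
    rw [mul_inv_rev]
  · intro x
    have htaylor := map_add_eq_sum_add_integral_iteratedFDeriv (f := f) (x := x₀) (y := x - x₀)
      (n := n) fun t _ => hf.contDiffAt.of_le (by exact_mod_cast le_top)
    simp only [iteratedFDeriv_apply_eq_iteratedDeriv_mul_prod, Finset.prod_const,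
      Finset.card_univ, Fintype.card_fin, smul_eq_mul, add_sub_cancel] at htaylor
    simp only [htaylor, smul_comm _ ((x - x₀) ^ (n + 1)), intervalIntegral.integral_smul]

theorem exists_contDiff_eq_sq_smul_of_double_zero [CompleteSpace E] {f : ℝ → E}
    (hf : ContDiff ℝ ∞ f) {x₀ : ℝ} (h₀ : f x₀ = 0) (h₁ : deriv f x₀ = 0) :
    ∃ K : ℝ → E, ContDiff ℝ ∞ K ∧ K x₀ = (2 : ℝ)⁻¹ • deriv (deriv f) x₀ ∧
      ∀ x, f x = (x - x₀) ^ 2 • K x := by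
  obtain ⟨K, hK, hK₀, hfK⟩ := exists_contDiff_taylor_remainder hf x₀ 1
  refine ⟨K, hK, ?_, fun x => ?_⟩
  · simpa [iteratedDeriv_succ] using hK₀
  · simpa [Finset.sum_range_succ, h₀, h₁] using hfK x

theorem deriv_deriv_pos_of_isLocalMin {f : ℝ → ℝ} {x : ℝ} (hmin : IsLocalMin f x)
    (hf : ContinuousAt f x) (hne : deriv (deriv f) x ≠ 0) : 0 < deriv (deriv f) x := by
  refine hne.lt_or_gt.resolve_left fun hneg => hne ?_
  have hmax := isLocalMax_of_deriv_deriv_neg hneg hmin.deriv_eq_zero hf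
  have hconst : f =ᶠ[𝓝 x] fun _ => f x := by
    filter_upwards [hmin, hmax] with y hxy hyx using le_antisymm hyx hxy
  simpa using hconst.deriv.deriv_eq

end Calculus

section DoubleZeroQuotient

/-- The quotient `G / H`, continued by the l'Hôpital value `G'' / H''` at the zeros of `H`. It is
meant for functions `G` and `H` such that every zero of `H` is a nondegenerate double zero of `H`
and a double zero of `G`. -/
def doubleZeroQuotient (G H : ℝ → ℝ) (s : ℝ) : ℝ :=
  open Classical in if H s = 0 then deriv (deriv G) s / deriv (deriv H) s else G s / H s

variable {G H : ℝ → ℝ}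

theorem mul_doubleZeroQuotient (hzero : ∀ s, H s = 0 → G s = 0) (s : ℝ) :
    H s * doubleZeroQuotient G H s = G s := by
  by_cases hs : H s = 0
  · rw [hs, zero_mul, hzero s hs]
  · rw [doubleZeroQuotient, if_neg hs, mul_div_cancel₀ _ hs]

theorem doubleZeroQuotient_pos (hG : ∀ s, H s = 0 → 0 < deriv (deriv G) s)
    (hH : ∀ s, H s = 0 → 0 < deriv (deriv H) s) (hoff : ∀ s, H s ≠ 0 → 0 < G s / H s) (s : ℝ) :
    0 < doubleZeroQuotient G H s := by
  by_cases hs : H s = 0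
  · rw [doubleZeroQuotient, if_pos hs]
    exact div_pos (hG s hs) (hH s hs)
  · rw [doubleZeroQuotient, if_neg hs]
    exact hoff s hs

theorem contDiff_doubleZeroQuotient (hG : ContDiff ℝ ∞ G) (hH : ContDiff ℝ ∞ H)
    (hG₀ : ∀ s, H s = 0 → G s = 0) (hG₁ : ∀ s, H s = 0 → deriv G s = 0)
    (hH₁ : ∀ s, H s = 0 → deriv H s = 0) (hH₂ : ∀ s, H s = 0 → deriv (deriv H) s ≠ 0) :
    ContDiff ℝ ∞ (doubleZeroQuotient G H) := by
  refine contDiff_iff_contDiffAt.2 fun s => ?_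
  by_cases hs : H s = 0
  · obtain ⟨K, hK, hKs, hGK⟩ :=
      exists_contDiff_eq_sq_smul_of_double_zero hG (hG₀ s hs) (hG₁ s hs)
    obtain ⟨L, hL, hLs, hHL⟩ := exists_contDiff_eq_sq_smul_of_double_zero hH hs (hH₁ s hs)
    have hLs₀ : L s ≠ 0 := by simpa [hLs] using hH₂ s hs
    refine (hK.contDiffAt.div hL.contDiffAt hLs₀).congr_of_eventuallyEq ?_
    filter_upwards [hL.continuous.continuousAt.eventually_ne hLs₀] with x hLx
    obtain rfl | hxs := eq_or_ne x s
    · rw [doubleZeroQuotient, if_pos hs, Pi.div_apply, hKs, hLs, smul_eq_mul, smul_eq_mul,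
        mul_div_mul_left _ _ (by norm_num)]
    · have hsq : (x - s) ^ 2 ≠ 0 := pow_ne_zero 2 (sub_ne_zero.2 hxs)
      have hHx : H x ≠ 0 := by rw [hHL, smul_eq_mul]; exact mul_ne_zero hsq hLx
      rw [doubleZeroQuotient, if_neg hHx, hGK, hHL, smul_eq_mul, smul_eq_mul,
        mul_div_mul_left _ _ hsq, Pi.div_apply]
  · refine (hG.contDiffAt.div hH.contDiffAt hs).congr_of_eventuallyEq ?_
    filter_upwards [hH.continuous.continuousAt.eventually_ne hs] with x hx
    exact if_neg hx

theorem periodic_deriv {E : Type*} [NormedAddCommGroup E] [NormedSpace ℝ E] {f : ℝ → E} {c : ℝ}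
    (hf : Function.Periodic f c) : Function.Periodic (deriv f) c := fun x => by
  rw [← deriv_comp_add_const, funext hf]

theorem periodic_doubleZeroQuotient {c : ℝ} (hG : Function.Periodic G c)
    (hH : Function.Periodic H c) : Function.Periodic (doubleZeroQuotient G H) c := fun s => by
  simp only [doubleZeroQuotient, hG s, hH s, periodic_deriv (periodic_deriv hG) s,
    periodic_deriv (periodic_deriv hH) s]

end DoubleZeroQuotient

section PeriodicFunctions

theorem periodic_eq_of_angle_eq {E : Type*} {f : ℝ → E} (hf : Function.Periodic f (2 * π))
    {s t : ℝ} (hst : (s : Real.Angle) = t) : f s = f t := by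
  rw [← hf.lift_coe s, ← hf.lift_coe t]
  exact congrArg hf.lift hst

theorem one_sub_cos_sub_eq_zero_iff {s t : ℝ} :
    1 - Real.cos (s - t) = 0 ↔ (s : Real.Angle) = t := by
  rw [← sub_eq_zero (a := (s : Real.Angle)), ← Real.Angle.coe_sub, ← Real.Angle.coe_zero,
    Real.Angle.angle_eq_iff_two_pi_dvd_sub, sub_eq_zero, eq_comm, Real.cos_eq_one_iff]
  simp only [sub_zero, mul_comm, eq_comm]

theorem one_sub_cos_sub_pos {s t : ℝ} (hst : (s : Real.Angle) ≠ t) :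
    0 < 1 - Real.cos (s - t) :=
  (sub_nonneg.2 (Real.cos_le_one _)).lt_of_ne' (mt one_sub_cos_sub_eq_zero_iff.1 hst)

theorem deriv_one_sub_cos_sub (α : ℝ) :
    (deriv fun t => 1 - Real.cos (t - α)) = fun t => Real.sin (t - α) := by
  funext t
  simp [deriv_comp_sub_const]

theorem deriv_one_sub_cos_sub_eq_zero {t α : ℝ} (h : 1 - Real.cos (t - α) = 0) :
    deriv (fun t => 1 - Real.cos (t - α)) t = 0 := by
  rw [deriv_one_sub_cos_sub]
  exact Real.sin_eq_zero_iff_cos_eq.2 (.inl (sub_eq_zero.1 h).symm)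

theorem deriv_deriv_one_sub_cos_sub_pos {t α : ℝ} (h : 1 - Real.cos (t - α) = 0) :
    0 < deriv (deriv fun t => 1 - Real.cos (t - α)) t := by
  have hcos : deriv (fun t => Real.sin (t - α)) t = Real.cos (t - α) := by
    simp [deriv_comp_sub_const]
  rw [deriv_one_sub_cos_sub, hcos, ← sub_eq_zero.1 h]
  exact one_pos

theorem periodic_one_sub_cos_sub (α : ℝ) :
    Function.Periodic (fun t => 1 - Real.cos (t - α)) (2 * π) := fun t => by
  simp only [add_sub_right_comm t, Real.cos_add_two_pi]

theorem exists_periodic_pos_factor_one_sub_cos {g : ℝ → ℝ} {α : ℝ} (hg : ContDiff ℝ ∞ g)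
    (hper : Function.Periodic g (2 * π)) (hmin : ∀ t : ℝ, (t : Real.Angle) ≠ α → g α < g t)
    (hnondeg : deriv (deriv g) α ≠ 0) :
    ∃ ψ : ℝ → ℝ, ContDiff ℝ ∞ ψ ∧ Function.Periodic ψ (2 * π) ∧ (∀ t, 0 < ψ t) ∧
      ∀ t, g t - g α = (1 - Real.cos (t - α)) * ψ t := by
  set G : ℝ → ℝ := fun t => g t - g α
  set H : ℝ → ℝ := fun t => 1 - Real.cos (t - α)
  have hG : ContDiff ℝ ∞ G := hg.sub contDiff_const
  have hangle : ∀ t, H t = 0 → (t : Real.Angle) = α := fun t => one_sub_cos_sub_eq_zero_iff.1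
  have hGper : Function.Periodic G (2 * π) := fun t => congrArg (· - g α) (hper t)
  have hG' : deriv G = deriv g := funext fun t => deriv_sub_const _
  have hG₀ : ∀ t, H t = 0 → G t = 0 := fun t ht =>
    sub_eq_zero.2 (periodic_eq_of_angle_eq hper (hangle t ht))
  have hGpos : ∀ t, H t ≠ 0 → 0 < G t := fun t ht =>
    sub_pos.2 (hmin t (mt one_sub_cos_sub_eq_zero_iff.2 ht))
  have hlocmin : ∀ t, H t = 0 → IsLocalMin G t := fun t ht => .of_forall fun u => by
    rw [hG₀ t ht]
    by_cases hu : H u = 0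
    exacts [(hG₀ u hu).ge, (hGpos u hu).le]
  have hG₂ : ∀ t, H t = 0 → 0 < deriv (deriv G) t := fun t ht => by
    refine deriv_deriv_pos_of_isLocalMin (hlocmin t ht) hG.continuous.continuousAt ?_
    rwa [hG', periodic_eq_of_angle_eq (periodic_deriv (periodic_deriv hper)) (hangle t ht)]
  exact ⟨doubleZeroQuotient G H,
    contDiff_doubleZeroQuotient hG (by fun_prop) hG₀ (fun t ht => (hlocmin t ht).deriv_eq_zero)
      (fun t => deriv_one_sub_cos_sub_eq_zero) fun t ht => (deriv_deriv_one_sub_cos_sub_pos ht).ne',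
    periodic_doubleZeroQuotient hGper (periodic_one_sub_cos_sub α),
    doubleZeroQuotient_pos hG₂ (fun t => deriv_deriv_one_sub_cos_sub_pos) fun t ht =>
      div_pos (hGpos t ht) (one_sub_cos_sub_pos (mt one_sub_cos_sub_eq_zero_iff.2 ht)),
    fun t => (mul_doubleZeroQuotient hG₀ t).symm⟩

end PeriodicFunctions

section Cutoff

theorem exists_contDiff_step {ε : ℝ} (hε : 0 < ε) :
    ∃ b : ℝ → ℝ, ContDiff ℝ ∞ b ∧ (∀ t, b t ∈ Set.Icc 0 1) ∧ (∀ t ≤ ε / 2, b t = 1) ∧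
      ∀ t, ε ≤ t → b t = 0 := by
  refine ⟨fun t => Real.smoothTransition (2 - 2 * t / ε),
    Real.smoothTransition.contDiff.comp (by fun_prop),
    fun t => ⟨Real.smoothTransition.nonneg _, Real.smoothTransition.le_one _⟩,
    fun t ht => Real.smoothTransition.one_of_one_le ?_,
    fun t ht => Real.smoothTransition.zero_of_nonpos ?_⟩
  · rw [le_sub_comm, div_le_iff₀ hε]
    linarith
  · rw [sub_nonpos, le_div_iff₀ hε]
    linarith

theorem mul_integral_comp_mul_eq (b : ℝ → ℝ) (r : ℝ) :
    r * ∫ t in (0 : ℝ)..1, b (t * r) = ∫ t in (0 : ℝ)..r, b t := by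
  rw [← smul_eq_mul, intervalIntegral.smul_integral_comp_mul_right, zero_mul, one_mul]

theorem integral_mem_Icc_of_eq_zero {b : ℝ → ℝ} (hb : Continuous b)
    (hb01 : ∀ t, b t ∈ Set.Icc 0 1) {ε : ℝ} (hb₀ : ∀ t, ε ≤ t → b t = 0) (hε : 0 ≤ ε) {r : ℝ}
    (hr : 0 ≤ r) : ∫ t in (0 : ℝ)..r, b t ∈ Set.Icc 0 ε := by
  have hint : ∀ x y, IntervalIntegrable b MeasureTheory.volume x y := hb.intervalIntegrable
  have hle : ∀ s, 0 ≤ s → ∫ t in (0 : ℝ)..s, b t ≤ s := fun s hs => by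
    simpa using intervalIntegral.integral_mono_on hs (hint 0 s) intervalIntegrable_const
      fun t _ => (hb01 t).2
  refine ⟨intervalIntegral.integral_nonneg hr fun t _ => (hb01 t).1, ?_⟩
  obtain hrε | hεr := le_total r ε
  · exact (hle r hr).trans hrε
  · have htail : ∫ t in ε..r, b t = 0 := by
      rw [intervalIntegral.integral_congr (g := fun _ => 0), intervalIntegral.integral_zero]
      exact fun t ht => hb₀ t (Set.uIcc_of_le hεr ▸ ht).1
    rw [← intervalIntegral.integral_add_adjacent_intervals (hint 0 ε) (hint ε r), htail, add_zero]
    exact hle ε hε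

-- For a smooth step `b` from `1` to `0`, the mean `χ r = ∫ t in 0..1, b (t * r)` is a cutoff
-- with `(r * χ r)' = b r`, so that `χ r + r * χ' r` stays in `[0, 1]`.
theorem exists_contDiff_cutoff {ε : ℝ} (hε : 0 < ε) :
    ∃ χ : ℝ → ℝ, ContDiff ℝ ∞ χ ∧ (∀ᶠ r in 𝓝 0, χ r = 1) ∧ (∀ r, 0 ≤ r → r * χ r ∈ Set.Icc 0 ε) ∧
      ∀ r, χ r + r * deriv χ r ∈ Set.Icc 0 1 := by
  obtain ⟨b, hb, hb01, hb_one, hb_zero⟩ := exists_contDiff_step hε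
  set χ : ℝ → ℝ := fun r => ∫ t in (0 : ℝ)..1, b (t * r)
  have hχ : ContDiff ℝ ∞ χ :=
    contDiff_intervalIntegral_of_contDiff (F := fun p : ℝ × ℝ => b (p.2 * p.1)) (by fun_prop) 0 1
  have hmul : ∀ r, r * χ r = ∫ t in (0 : ℝ)..r, b t := mul_integral_comp_mul_eq b
  have hderiv : ∀ r, χ r + r * deriv χ r = b r := fun r => by
    have hprod := (hasDerivAt_id' r).fun_mul (hχ.differentiable (by simp) r).hasDerivAt
    rw [funext hmul, one_mul] at hprod
    exact hprod.unique (hb.continuous.integral_hasStrictDerivAt 0 r).hasDerivAt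
  refine ⟨χ, hχ, ?_, fun r hr => hmul r ▸ integral_mem_Icc_of_eq_zero hb.continuous hb01 hb_zero
    hε.le hr, fun r => hderiv r ▸ hb01 r⟩
  filter_upwards [Iio_mem_nhds (half_pos hε)] with r hr
  have hconst : Set.EqOn (fun t => b (t * r)) (fun _ => 1) (Set.uIcc 0 1) := fun t ht => by
    rw [Set.uIcc_of_le zero_le_one] at ht
    have hr' : r < ε / 2 := hr
    exact hb_one _ (by nlinarith [ht.1, ht.2])
  calc χ r = ∫ _ in (0 : ℝ)..1, (1 : ℝ) := intervalIntegral.integral_congr hconst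
    _ = 1 := by simp

end Cutoff

section ChordInterpolation

/-- `f` has positive derivative along every ray issuing from `p`, at every point of the closed unit
ball other than `p`, and negative derivative at `p` in the direction `p`. For `‖p‖ = 1` the latter
says that `f` also increases on entering the ball radially at `p`, so that `f` has no critical point
in the closed unit ball. -/
structure IncreasesAwayFrom {V : Type*} [NormedAddCommGroup V] [NormedSpace ℝ V] (f : V → ℝ)
    (p : V) : Prop where
  fderiv_sub_pos : ∀ x, ‖x‖ ≤ 1 → x ≠ p → 0 < fderiv ℝ f x (x - p)
  fderiv_base_neg : fderiv ℝ f p p < 0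

namespace IncreasesAwayFrom

variable {V W : Type*} [NormedAddCommGroup V] [NormedSpace ℝ V] [NormedAddCommGroup W]
  [NormedSpace ℝ W] {f : V → ℝ} {p : V}

theorem fderiv_ne_zero (h : IncreasesAwayFrom f p) {x : V} (hx : ‖x‖ ≤ 1) : fderiv ℝ f x ≠ 0 := by
  intro hcrit
  obtain rfl | hxp := eq_or_ne x p
  · simpa [hcrit] using h.fderiv_base_neg
  · simpa [hcrit] using h.fderiv_sub_pos x hx hxp

theorem add_const (h : IncreasesAwayFrom f p) (c : ℝ) :
    IncreasesAwayFrom (fun x => f x + c) p where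
  fderiv_sub_pos x hx hxp := by simpa using h.fderiv_sub_pos x hx hxp
  fderiv_base_neg := by simpa using h.fderiv_base_neg

theorem comp_linearIsometryEquiv (h : IncreasesAwayFrom f p) (e : W ≃ₗᵢ[ℝ] V) :
    IncreasesAwayFrom (f ∘ e) (e.symm p) where
  fderiv_sub_pos x hx hxp := by
    have hpos := h.fderiv_sub_pos (e x) (by rwa [e.norm_map]) fun hex => hxp (by simp [← hex])
    have hfderiv := e.toContinuousLinearEquiv.comp_right_fderiv (f := f) (x := x)
    simp_all
  fderiv_base_neg := by
    have hneg := h.fderiv_base_neg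
    have hfderiv := e.toContinuousLinearEquiv.comp_right_fderiv (f := f) (x := e.symm p)
    simp_all

end IncreasesAwayFrom

variable {V : Type*} [NormedAddCommGroup V] [InnerProductSpace ℝ V]

theorem inner_lt_one_of_ne {p w : V} (hp : ‖p‖ = 1) (hw : ‖w‖ ≤ 1) (hwp : w ≠ p) : ⟪p, w⟫ < 1 := by
  have hsq := norm_sub_sq_real w p
  have hpos : 0 < ‖w - p‖ := norm_pos_iff.2 (sub_ne_zero.2 hwp)
  rw [hp, real_inner_comm] at hsq
  nlinarith [norm_nonneg w]

/-- The interpolation `(1 - ⟪p, w⟫) (χ E + (1 - χ) P)` between `(1 - ⟪p, w⟫) E w` near `p` and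
`(1 - ⟪p, w⟫) P w` away from `p`, with the cutoff `χ` taken at the distance `‖w - p‖`. It is meant
for functions `P` that are constant along the rays issuing from `p`, and so are determined by their
values on the unit sphere through `p`. -/
def chordInterpolation (χ : ℝ → ℝ) (p : V) (E P : V → ℝ) (w : V) : ℝ :=
  (1 - ⟪p, w⟫) * (χ ‖w - p‖ * E w + (1 - χ ‖w - p‖) * P w)

variable {χ : ℝ → ℝ} {p : V} {E P : V → ℝ}

theorem chordInterpolation_of_eq {w : V} (h : w ≠ p → P w = E w) (hp : ‖p‖ = 1) :
    chordInterpolation χ p E P w = (1 - ⟪p, w⟫) * E w := by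
  obtain rfl | hwp := eq_or_ne w p
  · simp [chordInterpolation, hp]
  · rw [chordInterpolation, h hwp]
    ring

theorem chordInterpolation_eventuallyEq (hχ : ∀ᶠ r in 𝓝 0, χ r = 1) :
    chordInterpolation χ p E P =ᶠ[𝓝 p] fun w => (1 - ⟪p, w⟫) * E w := by
  have hdist : Filter.Tendsto (fun w => ‖w - p‖) (𝓝 p) (𝓝 0) :=
    tendsto_iff_norm_sub_tendsto_zero.1 Filter.tendsto_id
  filter_upwards [hdist.eventually hχ] with w hw
  simp [chordInterpolation, hw]

theorem contDiff_chordInterpolation (hχ : ContDiff ℝ ∞ χ) (hχ_one : ∀ᶠ r in 𝓝 0, χ r = 1)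
    (hE : ContDiff ℝ ∞ E) (hP : ∀ w, w ≠ p → ContDiffAt ℝ ∞ P w) :
    ContDiff ℝ ∞ (chordInterpolation χ p E P) := by
  refine contDiff_iff_contDiffAt.2 fun w => ?_
  have hchord : ContDiff ℝ ∞ fun w => 1 - ⟪p, w⟫ :=
    contDiff_const.sub (contDiff_const.inner ℝ contDiff_id)
  obtain rfl | hwp := eq_or_ne w p
  · exact (hchord.mul hE).contDiffAt.congr_of_eventuallyEq (chordInterpolation_eventuallyEq hχ_one)
  · have hcut : ContDiffAt ℝ ∞ (fun w => χ ‖w - p‖) w :=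
      hχ.contDiffAt.comp w ((contDiffAt_id.sub contDiffAt_const).norm ℝ (sub_ne_zero.2 hwp))
    exact hchord.contDiffAt.mul
      ((hcut.mul hE.contDiffAt).add ((contDiffAt_const.sub hcut).mul (hP w hwp)))

theorem chordInterpolation_ray (hp : ‖p‖ = 1)
    (hP : ∀ w, ∀ s : ℝ, 0 < s → P (p + s • (w - p)) = P w)
    (w : V) {s : ℝ} (hs : 0 < s) :
    chordInterpolation χ p E P (p + s • (w - p)) =
      (1 - ⟪p, w⟫) * (s * (χ (s * ‖w - p‖) * E (p + s • (w - p)) +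
        (1 - χ (s * ‖w - p‖)) * P w)) := by
  have hinner : 1 - ⟪p, p + s • (w - p)⟫ = s * (1 - ⟪p, w⟫) := by
    rw [inner_add_right, inner_smul_right, inner_sub_right, real_inner_self_eq_norm_sq, hp]
    ring
  rw [chordInterpolation, hinner, add_sub_cancel_left, norm_smul, Real.norm_of_nonneg hs.le,
    hP w s hs]
  ring

theorem fderiv_chordInterpolation_sub (hχ : ContDiff ℝ ∞ χ) (hχ_one : ∀ᶠ r in 𝓝 0, χ r = 1)
    (hE : ContDiff ℝ ∞ E) (hP : ∀ w, w ≠ p → ContDiffAt ℝ ∞ P w) (hp : ‖p‖ = 1)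
    (hPray : ∀ w, ∀ s : ℝ, 0 < s → P (p + s • (w - p)) = P w) (w : V) :
    fderiv ℝ (chordInterpolation χ p E P) w (w - p) =
      (1 - ⟪p, w⟫) * ((χ ‖w - p‖ + ‖w - p‖ * deriv χ ‖w - p‖) * E w +
        (1 - (χ ‖w - p‖ + ‖w - p‖ * deriv χ ‖w - p‖)) * P w +
        χ ‖w - p‖ * fderiv ℝ E w (w - p)) := by
  have hray : HasDerivAt (fun s : ℝ => p + s • (w - p)) (w - p) 1 := by
    simpa using ((hasDerivAt_id (1 : ℝ)).smul_const (w - p)).const_add p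
  have hend : p + (1 : ℝ) • (w - p) = w := by rw [one_smul, add_sub_cancel]
  have hcomp {f : V → ℝ} (hf : ContDiff ℝ ∞ f) :
      HasDerivAt (fun s : ℝ => f (p + s • (w - p))) (fderiv ℝ f w (w - p)) 1 :=
    HasFDerivAt.comp_hasDerivAt 1
      (by rw [hend]; exact (hf.differentiable (by simp) w).hasFDerivAt) hray
  have hχray : HasDerivAt (fun s : ℝ => χ (s * ‖w - p‖)) (deriv χ ‖w - p‖ * ‖w - p‖) 1 := by
    have hscale : HasDerivAt (fun s : ℝ => s * ‖w - p‖) ‖w - p‖ 1 := hasDerivAt_mul_const _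
    exact HasDerivAt.comp 1
      (by rw [one_mul]; exact (hχ.differentiable (by simp) _).hasDerivAt) hscale
  have hformula := (((hasDerivAt_id' (1 : ℝ)).fun_mul ((hχray.fun_mul (hcomp hE)).fun_add
    ((hχray.const_sub 1).mul_const (P w)))).const_mul (1 - ⟪p, w⟫)).congr_of_eventuallyEq
    (by filter_upwards [lt_mem_nhds one_pos] with s hs using chordInterpolation_ray hp hPray w hs)
  rw [(hcomp (contDiff_chordInterpolation hχ hχ_one hE hP)).unique hformula]
  simp only [one_smul, one_mul, add_sub_cancel]
  ring

theorem fderiv_chordInterpolation_base (hχ : ∀ᶠ r in 𝓝 0, χ r = 1) (hE : DifferentiableAt ℝ E p)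
    (hp : ‖p‖ = 1) : fderiv ℝ (chordInterpolation χ p E P) p p = -E p := by
  have hchord : HasFDerivAt (fun w => 1 - ⟪p, w⟫) (-innerSL ℝ p) p := by
    simpa using (innerSL ℝ p).hasFDerivAt.const_sub 1
  rw [(chordInterpolation_eventuallyEq hχ).fderiv_eq, (hchord.fun_mul hE.hasFDerivAt).fderiv]
  simp [hp]

theorem abs_mul_le_of_mul_mem_Icc {c d r C ε : ℝ} (hr : 0 ≤ r) (hC : 0 ≤ C)
    (hc : r * c ∈ Set.Icc 0 ε) (hd : |d| ≤ C * r) : |c * d| ≤ C * ε :=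
  calc |c * d| ≤ |c| * (C * r) := by
        rw [abs_mul]
        gcongr
    _ = C * |r * c| := by
        rw [abs_mul, abs_of_nonneg hr]
        ring
    _ ≤ C * ε := by
        rw [abs_of_nonneg hc.1]
        exact mul_le_mul_of_nonneg_left hc.2 hC

theorem exists_increasesAwayFrom_chordInterpolation [FiniteDimensional ℝ V] {m : ℝ}
    (hm : 0 < m) (hp : ‖p‖ = 1) (hE : ContDiff ℝ ∞ E) (hmE : ∀ w, m ≤ E w)
    (hP : ∀ w, w ≠ p → ContDiffAt ℝ ∞ P w) (hmP : ∀ w, m ≤ P w)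
    (hPray : ∀ w, ∀ s : ℝ, 0 < s → P (p + s • (w - p)) = P w) :
    ∃ χ : ℝ → ℝ, ContDiff ℝ ∞ (chordInterpolation χ p E P) ∧
      IncreasesAwayFrom (chordInterpolation χ p E P) p := by
  obtain ⟨C, hC⟩ := (isCompact_closedBall (0 : V) 1).exists_bound_of_continuousOn
    (hE.continuous_fderiv (by simp)).continuousOn
  have hC₀ : 0 ≤ C := (norm_nonneg _).trans (hC 0 (by simp))
  obtain ⟨ε, hε, hCε⟩ := exists_pos_mul_lt hm C
  obtain ⟨χ, hχ, hχ_one, hχ_mul, hχ_deriv⟩ := exists_contDiff_cutoff hε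
  refine ⟨χ, contDiff_chordInterpolation hχ hχ_one hE hP, fun w hw hwp => ?_, ?_⟩
  · rw [fderiv_chordInterpolation_sub hχ hχ_one hE hP hp hPray]
    refine mul_pos (sub_pos.2 (inner_lt_one_of_ne hp hw hwp)) ?_
    set r := ‖w - p‖
    have hDE : |fderiv ℝ E w (w - p)| ≤ C * r :=
      (fderiv ℝ E w).le_of_opNorm_le (hC w (mem_closedBall_zero_iff.2 hw)) _
    have hsmall : |χ r * fderiv ℝ E w (w - p)| < m :=
      (abs_mul_le_of_mul_mem_Icc (norm_nonneg _) hC₀ (hχ_mul r (norm_nonneg _)) hDE).trans_lt hCε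
    obtain ⟨hκ₀, hκ₁⟩ := hχ_deriv r
    set κ := χ r + r * deriv χ r
    have hconv : m ≤ κ * E w + (1 - κ) * P w := by
      nlinarith [mul_le_mul_of_nonneg_left (hmE w) hκ₀,
        mul_le_mul_of_nonneg_left (hmP w) (sub_nonneg.2 hκ₁)]
    linarith [(abs_lt.1 hsmall).1]
  · rw [fderiv_chordInterpolation_base hχ_one (hE.differentiable (by simp) p) hp]
    linarith [hmE p]

end ChordInterpolation

section PeriodicFunctionsOnComplex

open Complex
open scoped ComplexConjugate

theorem contDiffAt_periodic_comp_arg {ψ : ℝ → ℝ} (hψ : ContDiff ℝ ∞ ψ)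
    (hper : Function.Periodic ψ (2 * π)) {w : ℂ} (hw : w ≠ 0) :
    ContDiffAt ℝ ∞ (fun z : ℂ => ψ (arg z)) w := by
  have harg {z : ℂ} (hz : z ∈ slitPlane) : ContDiffAt ℝ ∞ arg z := by
    have him : arg = fun z => imCLM (log z) := funext fun z => (log_im z).symm
    rw [him]
    exact imCLM.contDiff.contDiffAt.comp z ((contDiffAt_log hz).restrict_scalars ℝ)
  obtain hslit | hslit := mem_slitPlane_or_neg_mem_slitPlane hw
  · exact hψ.contDiffAt.comp w (harg hslit)
  · have hneg : ContDiffAt ℝ ∞ (fun z : ℂ => ψ (arg (-z) + π)) w :=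
      hψ.contDiffAt.comp w (((harg hslit).comp w contDiffAt_id.neg).add contDiffAt_const)
    refine hneg.congr_of_eventuallyEq ?_
    filter_upwards [isOpen_ne.mem_nhds hw] with z hz
    refine periodic_eq_of_angle_eq hper ?_
    rw [Real.Angle.coe_add, arg_neg_coe_angle hz, add_assoc, Real.Angle.coe_pi_add_coe_pi, add_zero]

theorem periodic_comp_arg_exp {ψ : ℝ → ℝ} (hper : Function.Periodic ψ (2 * π)) (τ : ℝ) :
    ψ (arg (exp (τ * I))) = ψ τ :=
  periodic_eq_of_angle_eq hper (by rw [arg_exp_mul_I, Real.Angle.coe_toIocMod])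

theorem exists_contDiff_extension_of_periodic {ψ : ℝ → ℝ} (hψ : ContDiff ℝ ∞ ψ)
    (hper : Function.Periodic ψ (2 * π)) {m : ℝ} (hm : ∀ t, m ≤ ψ t) :
    ∃ E : ℂ → ℝ, ContDiff ℝ ∞ E ∧ (∀ w, m ≤ E w) ∧ ∀ τ : ℝ, E (exp (τ * I)) = ψ τ := by
  refine ⟨fun w => m + Real.smoothTransition (2 * ‖w‖ ^ 2 - 1) * (ψ (arg w) - m),
    contDiff_iff_contDiffAt.2 fun w => ?_, fun w => ?_, fun τ => ?_⟩
  · have hcut : ContDiff ℝ ∞ fun w : ℂ => 2 * ‖w‖ ^ 2 - 1 :=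
      (contDiff_const.mul (contDiff_norm_sq ℝ)).sub contDiff_const
    obtain rfl | hw := eq_or_ne w 0
    · refine (contDiffAt_const (c := m)).congr_of_eventuallyEq ?_
      filter_upwards [hcut.continuous.continuousAt.eventually_lt continuousAt_const
        (by norm_num : 2 * ‖(0 : ℂ)‖ ^ 2 - 1 < (0 : ℝ))] with z hz
      simp [Real.smoothTransition.zero_of_nonpos hz.le]
    · exact contDiffAt_const.add ((Real.smoothTransition.contDiffAt.comp w hcut.contDiffAt).mul
        ((contDiffAt_periodic_comp_arg hψ hper hw).sub contDiffAt_const))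
  · exact le_add_of_nonneg_right
      (mul_nonneg (Real.smoothTransition.nonneg _) (sub_nonneg.2 (hm _)))
  · have hone : Real.smoothTransition (2 * ‖exp (τ * I)‖ ^ 2 - 1) = 1 :=
      Real.smoothTransition.one_of_one_le (by norm_num [norm_exp_ofReal_mul_I])
    simp only [hone, periodic_comp_arg_exp hper, one_mul, add_sub_cancel]

theorem sub_sq_eq_neg_norm_sq_mul {w p : ℂ} (hw : ‖w‖ = 1) (hp : ‖p‖ = 1) :
    (w - p) ^ 2 = -((‖w - p‖ ^ 2 : ℝ) * (w * p)) := by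
  have hww : w * conj w = 1 := by simp [mul_conj', hw]
  have hpp : p * conj p = 1 := by simp [mul_conj', hp]
  rw [ofReal_pow, ← mul_conj', map_sub]
  linear_combination (w * p - p ^ 2) * hww + (w * p - w ^ 2) * hpp

theorem two_nsmul_arg_exp_sub_exp {τ α : ℝ} (hne : exp (τ * I) ≠ exp (α * I)) :
    2 • (arg (exp (τ * I) - exp (α * I)) : Real.Angle) = τ + α + π := by
  have hdist : 0 < ‖exp (τ * I) - exp (α * I)‖ ^ 2 :=
    pow_pos (norm_pos_iff.2 (sub_ne_zero.2 hne)) 2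
  have hprod : exp (τ * I) * exp (α * I) = exp ((τ + α : ℝ) * I) := by
    rw [← exp_add, ofReal_add, add_mul]
  rw [← arg_pow_coe_angle, sub_sq_eq_neg_norm_sq_mul (norm_exp_ofReal_mul_I τ)
    (norm_exp_ofReal_mul_I α), hprod, ← mul_neg, arg_real_mul _ hdist,
    arg_neg_coe_angle (exp_ne_zero _), arg_exp_mul_I, Real.Angle.coe_toIocMod, Real.Angle.coe_add]

theorem inner_exp_exp (α τ : ℝ) : ⟪exp (α * I), exp (τ * I)⟫ = Real.cos (τ - α) := by
  simp only [Complex.inner, mul_re, conj_re, conj_im, exp_ofReal_mul_I_re, exp_ofReal_mul_I_im,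
    Real.cos_sub]
  ring

theorem exists_ray_extension_of_periodic {ψ : ℝ → ℝ} (hψ : ContDiff ℝ ∞ ψ)
    (hper : Function.Periodic ψ (2 * π)) (α : ℝ) :
    ∃ P : ℂ → ℝ, (∀ w, w ≠ exp (α * I) → ContDiffAt ℝ ∞ P w) ∧
      (∀ w, P w ∈ Set.range ψ) ∧
      (∀ w, ∀ s : ℝ, 0 < s → P (exp (α * I) + s • (w - exp (α * I))) = P w) ∧
      ∀ τ : ℝ, exp (τ * I) ≠ exp (α * I) → P (exp (τ * I)) = ψ τ := by
  set p := exp (α * I)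
  refine ⟨fun w => ψ (2 * arg (w - p) + (π - α)), fun w hw => ?_, fun w => ⟨_, rfl⟩,
    fun w s hs => ?_, fun τ hτ => ?_⟩
  · have hper' : Function.Periodic (fun t => ψ (2 * t + (π - α))) (2 * π) := fun t => by
      simpa only [mul_add, add_right_comm _ (2 * (2 * π)), nsmul_eq_mul, Nat.cast_ofNat]
        using hper.nsmul 2 (2 * t + (π - α))
    exact (contDiffAt_periodic_comp_arg (by fun_prop) hper' (sub_ne_zero.2 hw)).comp
      (f := fun z => z - p) w (contDiffAt_id.sub contDiffAt_const)
  · simp only [add_sub_cancel_left, real_smul, arg_real_mul _ hs]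
  · refine periodic_eq_of_angle_eq hper ?_
    rw [two_mul, Real.Angle.coe_add, Real.Angle.coe_add, ← two_nsmul,
      two_nsmul_arg_exp_sub_exp hτ, Real.Angle.coe_sub]
    calc (τ + α + π + (π - α) : Real.Angle) = τ + (π + π) := by abel
      _ = τ := by rw [Real.Angle.coe_pi_add_coe_pi, add_zero]

theorem exists_increasesAwayFrom_exp {ψ : ℝ → ℝ} (hψ : ContDiff ℝ ∞ ψ)
    (hper : Function.Periodic ψ (2 * π)) (hpos : ∀ t, 0 < ψ t) (α : ℝ) :
    ∃ F : ℂ → ℝ, ContDiff ℝ ∞ F ∧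
      (∀ τ : ℝ, F (exp (τ * I)) = (1 - Real.cos (τ - α)) * ψ τ) ∧
      IncreasesAwayFrom F (exp (α * I)) := by
  obtain ⟨_, ⟨t₀, rfl⟩, ht₀⟩ := (hper.compact_of_continuous Real.two_pi_pos.ne'
    hψ.continuous).exists_isLeast (Set.range_nonempty ψ)
  obtain ⟨E, hE, hmE, hEexp⟩ :=
    exists_contDiff_extension_of_periodic hψ hper fun t => ht₀ ⟨t, rfl⟩
  obtain ⟨P, hP, hPψ, hPray, hPexp⟩ := exists_ray_extension_of_periodic hψ hper α
  obtain ⟨χ, hF, hinc⟩ := exists_increasesAwayFrom_chordInterpolation (hpos t₀)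
    (norm_exp_ofReal_mul_I α) hE hmE hP (fun w => ht₀ (hPψ w)) hPray
  refine ⟨_, hF, fun τ => ?_, hinc⟩
  rw [chordInterpolation_of_eq (fun hτ => by rw [hPexp τ hτ, hEexp]) (norm_exp_ofReal_mul_I α),
    inner_exp_exp, hEexp]

end PeriodicFunctionsOnComplex

section UnitCircle

theorem sphPt_apply_zero (t : ℝ) : sphPt t 0 = Real.cos t := rfl

theorem sphPt_apply_one (t : ℝ) : sphPt t 1 = Real.sin t := rfl

theorem orthonormalBasisOneI_repr_exp (t : ℝ) :
    Complex.orthonormalBasisOneI.repr (Complex.exp (t * Complex.I)) = sphPt t := by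
  rw [← LinearIsometryEquiv.eq_symm_apply, Complex.orthonormalBasisOneI_repr_symm_apply,
    sphPt_apply_zero, sphPt_apply_one, Complex.exp_mul_I, Complex.ofReal_cos, Complex.ofReal_sin]

theorem norm_sphPt (t : ℝ) : ‖sphPt t‖ = 1 := by
  rw [← orthonormalBasisOneI_repr_exp, LinearIsometryEquiv.norm_map,
    Complex.norm_exp_ofReal_mul_I]

theorem coe_eq_coe_of_sphPt_eq {s t : ℝ} (h : sphPt s = sphPt t) : (s : Real.Angle) = t :=
  Real.Angle.cos_sin_inj (congrArg (· 0) h) (congrArg (· 1) h)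

theorem hasDerivAt_sphPt (t : ℝ) : HasDerivAt sphPt (sphPt (t + π / 2)) t := by
  refine (EuclideanSpace.equiv (Fin 2) ℝ).symm.hasFDerivAt.comp_hasDerivAt t
    (hasDerivAt_pi.2 (Fin.forall_fin_two.2 ⟨?_, ?_⟩))
  · simpa [Real.cos_add_pi_div_two] using Real.hasDerivAt_cos t
  · simpa [Real.sin_add_pi_div_two] using Real.hasDerivAt_sin t

theorem sphPt_sub_sphPt (t α : ℝ) :
    sphPt t - sphPt α =
      (1 - Real.cos (t - α)) • sphPt t + Real.sin (t - α) • sphPt (t + π / 2) := by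
  have hcos : Real.cos α = Real.cos t * Real.cos (t - α) + Real.sin t * Real.sin (t - α) := by
    rw [← Real.cos_sub, sub_sub_cancel]
  have hsin : Real.sin α = Real.sin t * Real.cos (t - α) - Real.cos t * Real.sin (t - α) := by
    rw [← Real.sin_sub, sub_sub_cancel]
  ext i
  fin_cases i
  · simp only [Fin.zero_eta, PiLp.sub_apply, PiLp.add_apply, PiLp.smul_apply, smul_eq_mul,
      sphPt_apply_zero, Real.cos_add_pi_div_two, hcos]
    ring
  · simp only [Fin.mk_one, PiLp.sub_apply, PiLp.add_apply, PiLp.smul_apply, smul_eq_mul,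
      sphPt_apply_one, Real.sin_add_pi_div_two, hsin]
    ring

theorem exists_extension_increasesAwayFrom_sphPt {g : ℝ → ℝ} {α : ℝ} (hg : ContDiff ℝ ∞ g)
    (hper : Function.Periodic g (2 * π)) (hmin : ∀ t : ℝ, (t : Real.Angle) ≠ α → g α < g t)
    (hnondeg : deriv (deriv g) α ≠ 0) :
    ∃ f : E2 → ℝ, ContDiff ℝ ∞ f ∧ (∀ t, f (sphPt t) = g t) ∧ IncreasesAwayFrom f (sphPt α) := by
  obtain ⟨ψ, hψ, hψper, hψpos, hgψ⟩ := exists_periodic_pos_factor_one_sub_cos hg hper hmin hnondeg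
  obtain ⟨F, hF, hFexp, hinc⟩ := exists_increasesAwayFrom_exp hψ hψper hψpos α
  set e := Complex.orthonormalBasisOneI.repr.symm
  refine ⟨fun x => F (e x) + g α, (hF.comp e.contDiff).add contDiff_const, fun t => ?_, ?_⟩
  · simp only [e, ← orthonormalBasisOneI_repr_exp, LinearIsometryEquiv.symm_apply_apply, hFexp,
      ← hgψ, sub_add_cancel]
  · rw [← orthonormalBasisOneI_repr_exp]
    exact (hinc.comp_linearIsometryEquiv e).add_const (g α)

theorem IncreasesAwayFrom.fderiv_sphPt_pos {f : E2 → ℝ} {α t : ℝ}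
    (h : IncreasesAwayFrom f (sphPt α)) (hf : DifferentiableAt ℝ f (sphPt t))
    (hcrit : deriv (fun s => f (sphPt s)) t = 0) (ht : (t : Real.Angle) ≠ α) :
    0 < fderiv ℝ f (sphPt t) (sphPt t) := by
  have htangent : fderiv ℝ f (sphPt t) (sphPt (t + π / 2)) = 0 := by
    rw [← hcrit]
    exact (hf.hasFDerivAt.comp_hasDerivAt t (hasDerivAt_sphPt t)).deriv.symm
  have hpos := h.fderiv_sub_pos (sphPt t) (norm_sphPt t).le (mt coe_eq_coe_of_sphPt_eq ht)
  rw [sphPt_sub_sphPt, map_add, map_smul, map_smul, htangent, smul_zero, add_zero,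
    smul_eq_mul] at hpos
  exact (mul_pos_iff_of_pos_left (one_sub_cos_sub_pos ht)).1 hpos

end UnitCircle

section Ribbon

variable {n : ℕ} (a : Ribbon n)

theorem Ribbon.exists_coe_eq_of_deriv_eq_zero {t : ℝ} (ht : deriv a.g t = 0) :
    ∃ i, (t : Real.Angle) = a.θ i := by
  have hcoe := Real.Angle.coe_toIcoMod t 0
  obtain ⟨i, hi⟩ := a.crit_only (toIcoMod Real.two_pi_pos 0 t)
    (by simpa using toIcoMod_mem_Ico Real.two_pi_pos 0 t)
    (by rw [periodic_eq_of_angle_eq (periodic_deriv a.periodic_g) hcoe, ht])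
  exact ⟨i, by rw [← hi, hcoe]⟩

theorem Ribbon.exists_strict_min_node :
    ∃ i, (∀ t, a.g (a.θ i) ≤ a.g t) ∧
      ∀ t : ℝ, (t : Real.Angle) ≠ a.θ i → a.g (a.θ i) < a.g t := by
  have hnode {t : ℝ} (ht : ∀ s, a.g t ≤ a.g s) : ∃ i, (t : Real.Angle) = a.θ i :=
    a.exists_coe_eq_of_deriv_eq_zero (IsLocalMin.deriv_eq_zero (.of_forall ht))
  obtain ⟨_, ⟨t₀, rfl⟩, ht₀⟩ := (a.periodic_g.compact_of_continuous Real.two_pi_pos.ne'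
    a.smooth_g.continuous).exists_isLeast (Set.range_nonempty a.g)
  obtain ⟨i, hi⟩ := hnode fun s => ht₀ ⟨s, rfl⟩
  have hmin : ∀ t, a.g (a.θ i) ≤ a.g t := fun t =>
    periodic_eq_of_angle_eq a.periodic_g hi ▸ ht₀ ⟨t, rfl⟩
  refine ⟨i, hmin, fun t hti => (hmin t).lt_of_ne fun heq => hti ?_⟩
  obtain ⟨j, hj⟩ := hnode (heq ▸ hmin)
  have hij : i = j := a.values_distinct i j (heq.trans (periodic_eq_of_angle_eq a.periodic_g hj))
  rw [hj, hij]

theorem Ribbon.coe_theta_ne {i j : Fin n} (hij : i ≠ j) : (a.θ i : Real.Angle) ≠ a.θ j := fun h =>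
  hij (a.values_distinct i j (periodic_eq_of_angle_eq a.periodic_g h))

variable {a}

theorem IsExtension.of_increasesAwayFrom {f : E2 → ℝ} {i₀ : Fin n} (hf : ContDiff ℝ ∞ f)
    (hfg : ∀ t, f (sphPt t) = a.g t) (hinc : IncreasesAwayFrom f (sphPt (a.θ i₀)))
    (hmin : ∀ t, a.g (a.θ i₀) ≤ a.g t)
    (hν : ∀ i, a.ν i = 1 ↔
      (deriv (deriv a.g) (a.θ i) < 0 ∨ ∀ t : ℝ, a.g (a.θ i) ≤ a.g t)) :
    IsExtension a f := by
  have hgrad (i) : ⟪gradient f (sphPt (a.θ i)), sphPt (a.θ i)⟫ =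
      fderiv ℝ f (sphPt (a.θ i)) (sphPt (a.θ i)) := by
    rw [gradient, InnerProductSpace.toDual_symm_apply]
  have hradial (i) (hi : i ≠ i₀) : 0 < fderiv ℝ f (sphPt (a.θ i)) (sphPt (a.θ i)) :=
    hinc.fderiv_sphPt_pos (hf.differentiable (by simp) _)
      (by rw [funext hfg, a.node_crit]) (a.coe_theta_ne hi)
  have hmin₂ : 0 < deriv (deriv a.g) (a.θ i₀) := deriv_deriv_pos_of_isLocalMin
    (.of_forall hmin) a.smooth_g.continuous.continuousAt (a.node_nondeg i₀)
  refine ⟨hf, hfg, fun x hx => hinc.fderiv_ne_zero (mem_sphere_zero_iff_norm.1 hx).le,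
    fun i => ⟨fun hmax => ?_, fun hlocmin => ?_⟩⟩ <;> rw [hgrad]
  · have hi : i ≠ i₀ := by
      rintro rfl
      exact hmax.not_gt hmin₂
    simpa [(hν i).2 (.inl hmax)] using hradial i hi
  · obtain rfl | hi := eq_or_ne i i₀
    · simpa [(hν i).2 (.inr hmin)] using hinc.fderiv_base_neg
    · have hne : a.ν i ≠ 1 := fun h => ((hν i).1 h).elim hlocmin.not_gt fun hmin' =>
        hi (a.values_distinct i i₀ (le_antisymm (hmin' _) (hmin _)))
      simpa [(a.nu_sign i).resolve_left hne] using hradial i hi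

theorem IncreasesAwayFrom.critPts_eq_empty {f : E2 → ℝ} {p : E2} (h : IncreasesAwayFrom f p) :
    critPts f = ∅ :=
  Set.eq_empty_of_forall_notMem fun _ hx =>
    h.fderiv_ne_zero (mem_ball_zero_iff.1 hx.1).le hx.2

theorem gammaR_eq_zero_of_isExtension {f : E2 → ℝ} (hf : IsExtension a f) (hcrit : critPts f = ∅) :
    gammaR a = 0 :=
  le_antisymm (sInf_le ⟨f, hf, by rw [hcrit, Set.encard_empty]⟩) zero_le

end Ribbon

/-- If the marking of a ribbon `a` is defined by: a node is positive iff it is a local maximum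
of `φ` (second derivative of `g` negative) or the point where `φ` attains its absolute minimum,
then `γ(a) = 0`, i.e. `a` admits an extension with no critical points in the open unit disk. -/
theorem stmt_14 (n : ℕ) (a : Ribbon n)
    (hν : ∀ i, a.ν i = 1 ↔
      (deriv (deriv a.g) (a.θ i) < 0 ∨ ∀ t : ℝ, a.g (a.θ i) ≤ a.g t)) :
    gammaR a = 0 ∧ ∃ f : E2 → ℝ, IsExtension a f ∧ critPts f = ∅ := by
  obtain ⟨i₀, hmin, hlt⟩ := a.exists_strict_min_node
  obtain ⟨f, hf, hfg, hinc⟩ := exists_extension_increasesAwayFrom_sphPt a.smooth_g a.periodic_g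
    hlt (a.node_nondeg i₀)
  have hext : IsExtension a f := .of_increasesAwayFrom hf hfg hinc hmin hν
  have hcrit : critPts f = ∅ := hinc.critPts_eq_empty
  exact ⟨gammaR_eq_zero_of_isExtension hext hcrit, f, hext, hcrit⟩
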